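/- Let P be the R-measure and c = (1/2, √3/6). For every positive integer ℓ and n = 3^ℓ, the set { S_ω(c) : ω ∈ {1,2,3}^ℓ } is the unique optimal set of n-means for P, and the quantization error is V_n(P) = (1/6)·(1/9^ℓ). -/

import Mathlib

open MeasureTheory ENNReal

noncomputable section

abbrev E2 : Type := EuclideanSpace ℝ (Fin 2)

/-- The point (a, b) of the Euclidean plane. -/
def pt (a b : ℝ) : E2 := (WithLp.equiv 2 (Fin 2 → ℝ)).symm ![a, b]

/-- S₁(x) = x/3. -/
def S1 : E2 → E2 := fun x => (3 : ℝ)⁻¹ • x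

/-- S₂(x) = x/3 + (2/3, 0). -/
def S2 : E2 → E2 := fun x => (3 : ℝ)⁻¹ • x + pt (2/3) 0

/-- S₃(x) = x/3 + (1/3, √3/3). -/
def S3 : E2 → E2 := fun x => (3 : ℝ)⁻¹ • x + pt (1/3) (Real.sqrt 3 / 3)

def Smap : Fin 3 → E2 → E2 := ![S1, S2, S3]

/-- For a word ω = ω₁⋯ω_k ∈ {1,2,3}^k, the composition S_ω = S_{ω₁} ∘ ⋯ ∘ S_{ω_k}. -/
def Sword {k : ℕ} (ω : Fin k → Fin 3) : E2 → E2 :=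
  fun x => (List.ofFn fun i => Smap (ω i)).foldr (fun g y => g y) x

/-- The closed triangle with vertices (0,0), (1,0), (1/2, √3/2). -/
def Tri : Set E2 := convexHull ℝ {pt 0 0, pt 1 0, pt (1/2) (Real.sqrt 3 / 2)}

/-- The distortion error ∫ min_{a ∈ α} ‖x − a‖² dμ of a set α of points. -/
def err (μ : Measure E2) (α : Set E2) : ℝ≥0∞ :=
  ∫⁻ x, ⨅ a ∈ α, ENNReal.ofReal (‖x - a‖ ^ 2) ∂μ

/-- The n-th quantization error V_n(μ). -/
def quantErr (μ : Measure E2) (n : ℕ) : ℝ≥0∞ :=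
  ⨅ (α : Set E2) (_ : α.Finite ∧ α.ncard ≤ n), err μ α

/-- α is an optimal set of n-means for μ. -/
def IsOptimal (μ : Measure E2) (n : ℕ) (α : Set E2) : Prop :=
  α.Finite ∧ α.ncard ≤ n ∧ err μ α = quantErr μ n

/-!
Fix a cap `t`. A centre `a` *saves* `(t - ‖x - a‖²)⁺` at `x`, and
`min_{a ∈ β} ‖x - a‖² ≥ t - ∑_{a ∈ β} (t - ‖x - a‖²)⁺`, so an upper bound `m` for the mean saving
of a single centre gives `V_n ≥ t - n m`. For `n = 3^ℓ` the right cap is `t = 9^{-ℓ} / 2`: the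
bound `m = 27^{-ℓ} / 3` holds, with equality only at the points `S_ω(c)`, and these attain
`t - n m = 9^{-ℓ} / 6`.

By self-similarity the mean saving of `a` is `27^{-ℓ}` times the sum, over the words `ω` of
length `ℓ`, of the mean savings under the cap `1/2` of the pulled-back centres `S_ω⁻¹(a)`; the
copies of the triangle seen from these centres are at mutual distance at least `1`.

* If only one of them saves anything, it suffices to bound its mean saving by `1/3`. This mean is
  `1/2 - 1/6 - ‖a - c‖²` plus the mean of the convex function `(‖x - a‖² - 1/2)⁺`, which is at
  most its average over the nine vertices `S_i(V_j)` of the first-level cells.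
* If at least two of them do, each misses a first-level cell completely. Comparison at a point
  between the other two cells bounds its mean saving by `2/3 (1/2 - ‖m - a‖²)` for some `m` in the
  triangle, and points `u_1, …, u_r` at mutual distance at least `1` satisfy
  `∑ (1/2 - ‖u_i‖²) ≤ 1/2`.
-/

section InnerProductSpace

variable {ι E : Type*} [NormedAddCommGroup E] [InnerProductSpace ℝ E]

lemma norm_smul_add_smul_sub_sq {s t : ℝ} (hst : s + t = 1) (x y a : E) :
    ‖s • x + t • y - a‖ ^ 2 = s * ‖x - a‖ ^ 2 + t * ‖y - a‖ ^ 2 - s * t * ‖x - y‖ ^ 2 := by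
  obtain rfl : t = 1 - s := by linarith
  have hcomb : s • x + (1 - s) • y - a = s • (x - a) + (1 - s) • (y - a) := by module
  have hdiff : x - y = (x - a) - (y - a) := by abel
  rw [hcomb, hdiff, norm_add_sq_real, norm_sub_sq_real (x - a) (y - a), norm_smul, norm_smul,
    mul_pow, mul_pow, Real.norm_eq_abs, Real.norm_eq_abs, sq_abs, sq_abs, real_inner_smul_left,
    real_inner_smul_right]
  ring

lemma sum_sum_norm_sub_sq (s : Finset ι) (u : ι → E) :
    ∑ i ∈ s, ∑ j ∈ s, ‖u i - u j‖ ^ 2 =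
      2 * (s.card * ∑ i ∈ s, ‖u i‖ ^ 2 - ‖∑ i ∈ s, u i‖ ^ 2) := by
  rw [← real_inner_self_eq_norm_sq (∑ i ∈ s, u i), sum_inner]
  simp only [norm_sub_sq_real, Finset.sum_add_distrib, Finset.sum_sub_distrib, Finset.sum_const,
    nsmul_eq_mul, ← Finset.mul_sum, inner_sum]
  ring

lemma sum_sub_norm_sq_le_of_pairwise {t : ℝ} {s : Finset ι} (hs : s.Nonempty) (u : ι → E)
    (hsep : (s : Set ι).Pairwise fun i j => 2 * t ≤ ‖u i - u j‖ ^ 2) :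
    ∑ i ∈ s, (t - ‖u i‖ ^ 2) ≤ t := by
  classical
  have hpairs : s.card * (s.card * (2 * t) - 2 * t) ≤ ∑ i ∈ s, ∑ j ∈ s, ‖u i - u j‖ ^ 2 :=
    calc s.card * (s.card * (2 * t) - 2 * t)
        = ∑ i ∈ s, ∑ j ∈ s, (2 * t - if i = j then 2 * t else 0) := by
          simp [Finset.sum_sub_distrib, mul_sub]
      _ ≤ ∑ i ∈ s, ∑ j ∈ s, ‖u i - u j‖ ^ 2 := by
          gcongr with i hi j hj
          by_cases hij : i = j
          · simp [hij]
          · simpa [hij] using hsep hi hj hij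
  rw [sum_sum_norm_sub_sq] at hpairs
  have hcard : (0 : ℝ) < s.card := by exact_mod_cast hs.card_pos
  have hmul : s.card * ((s.card - 1) * t) ≤ s.card * ∑ i ∈ s, ‖u i‖ ^ 2 := by
    nlinarith [sq_nonneg ‖∑ i ∈ s, u i‖]
  rw [Finset.sum_sub_distrib, Finset.sum_const, nsmul_eq_mul]
  linarith [le_of_mul_le_mul_left hmul hcard]

lemma integral_norm_sub_sq_eq_add [CompleteSpace E] [MeasurableSpace E] {μ : Measure E}
    [IsProbabilityMeasure μ] (hid : Integrable (fun x => x) μ)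
    (hsq : Integrable (fun x => ‖x - ∫ y, y ∂μ‖ ^ 2) μ) (a : E) :
    ∫ x, ‖x - a‖ ^ 2 ∂μ = ∫ x, ‖x - ∫ y, y ∂μ‖ ^ 2 ∂μ + ‖(∫ y, y ∂μ) - a‖ ^ 2 := by
  set c := ∫ y, y ∂μ with hc
  have hcentred : Integrable (fun x => x - c) μ := hid.sub (integrable_const c)
  have hcross : Integrable (fun x => 2 * inner ℝ (c - a) (x - c)) μ :=
    (hcentred.const_inner (c - a)).const_mul 2
  have hzero : ∫ x, 2 * inner ℝ (c - a) (x - c) ∂μ = 0 := by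
    rw [integral_const_mul, integral_inner hcentred, integral_sub hid (integrable_const c),
      integral_const, probReal_univ, one_smul, ← hc, sub_self, inner_zero_right, mul_zero]
  have hsum : Integrable (fun x => ‖x - c‖ ^ 2 + 2 * inner ℝ (c - a) (x - c)) μ := hsq.add hcross
  calc ∫ x, ‖x - a‖ ^ 2 ∂μ
      = ∫ x, (‖x - c‖ ^ 2 + 2 * inner ℝ (c - a) (x - c) + ‖c - a‖ ^ 2) ∂μ := by
        congr 1 with x
        rw [real_inner_comm, ← norm_add_sq_real, sub_add_sub_cancel]
    _ = ∫ x, ‖x - c‖ ^ 2 ∂μ + ‖c - a‖ ^ 2 := by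
        rw [integral_add hsum (integrable_const _), integral_add hsq hcross, hzero]
        simp

end InnerProductSpace

section Saving

/-- The part of a cap `t` that a centre `a` saves at `x`. The cost of serving `x` from a finite
set `β` is at least `t` minus the total saving of the points of `β`, so bounds on the mean saving
of a single centre turn into lower bounds on quantization errors. -/
def saving {E : Type*} [NormedAddCommGroup E] (t : ℝ) (a x : E) : ℝ := max (t - ‖x - a‖ ^ 2) 0

/-- The amount by which the cost of serving `x` from the centre `a` exceeds the cap `t`. -/
def excess {E : Type*} [NormedAddCommGroup E] (t : ℝ) (a x : E) : ℝ := max (‖x - a‖ ^ 2 - t) 0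

variable {E : Type*} [NormedAddCommGroup E]

lemma saving_nonneg (t : ℝ) (a x : E) : 0 ≤ saving t a x := le_max_right _ _

lemma saving_pos_iff {t : ℝ} {a x : E} : 0 < saving t a x ↔ ‖x - a‖ ^ 2 < t := by
  simp [saving]

@[fun_prop]
lemma continuous_saving (t : ℝ) (a : E) : Continuous (saving t a) := by
  unfold saving
  fun_prop

lemma saving_eq_add_excess (t : ℝ) (a x : E) :
    saving t a x = t - ‖x - a‖ ^ 2 + excess t a x := by
  have h := max_zero_sub_eq_self (t - ‖x - a‖ ^ 2)
  rw [neg_sub, max_comm, max_comm 0] at h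
  unfold saving excess
  linarith [max_comm (t - ‖x - a‖ ^ 2) 0]

lemma saving_eq_sq_mul {r : ℝ} (t : ℝ) {a x a' x' : E} (h : ‖x' - a'‖ = r * ‖x - a‖) :
    saving (r ^ 2 * t) a' x' = r ^ 2 * saving t a x := by
  rw [saving, saving, h, mul_pow, ← mul_sub, mul_max_of_nonneg _ _ (sq_nonneg r), mul_zero]

lemma excess_nonneg (t : ℝ) (a x : E) : 0 ≤ excess t a x := le_max_right _ _

@[fun_prop]
lemma continuous_excess (t : ℝ) (a : E) : Continuous (excess t a) := by
  unfold excess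
  fun_prop

lemma convexOn_excess [NormedSpace ℝ E] (t : ℝ) (a : E) :
    ConvexOn ℝ Set.univ (excess t a) := by
  have hsq : ConvexOn ℝ Set.univ fun x : E => ‖x - a‖ ^ 2 := by
    simp only [← dist_eq_norm]
    exact (convexOn_univ_dist a).pow (fun x _ => dist_nonneg) 2
  exact (hsq.sub (concaveOn_const t convex_univ)).sup (convexOn_const 0 convex_univ)

lemma exists_mem_segment_saving_add_saving_lt [InnerProductSpace ℝ E] {u w : E} (huw : u ≠ w)
    {t : ℝ} {a : E} (hpos : 0 < saving t a u + saving t a w) :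
    ∃ m ∈ segment ℝ u w, saving t a u + saving t a w < 2 * (t - ‖m - a‖ ^ 2) := by
  unfold saving at hpos ⊢
  rcases le_total (t - ‖u - a‖ ^ 2) 0 with hu | hu <;>
    rcases le_total (t - ‖w - a‖ ^ 2) 0 with hw | hw
  · simp [hu, hw] at hpos
  · rw [max_eq_right hu, max_eq_left hw] at hpos ⊢
    exact ⟨w, right_mem_segment ℝ u w, by linarith⟩
  · rw [max_eq_left hu, max_eq_right hw] at hpos ⊢
    exact ⟨u, left_mem_segment ℝ u w, by linarith⟩
  · refine ⟨(1 / 2 : ℝ) • u + (1 / 2 : ℝ) • w,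
      ⟨1 / 2, 1 / 2, by norm_num, by norm_num, by norm_num, rfl⟩, ?_⟩
    have hdist : 0 < ‖u - w‖ ^ 2 := pow_pos (norm_pos_iff.2 (sub_ne_zero.2 huw)) 2
    rw [max_eq_left hu, max_eq_left hw, norm_smul_add_smul_sub_sq (by norm_num)]
    linarith

lemma integrable_saving [MeasurableSpace E] [OpensMeasurableSpace E]
    [SecondCountableTopology E] (μ : Measure E) [IsFiniteMeasure μ] (t : ℝ) (a : E) :
    Integrable (saving t a) μ := by
  refine .of_bound (continuous_saving t a).aestronglyMeasurable (max t 0) (.of_forall fun x => ?_)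
  rw [Real.norm_of_nonneg (saving_nonneg t a x)]
  exact max_le_max_right 0 (sub_le_self t (sq_nonneg _))

lemma ofReal_sub_sum_integral_saving_le_err (μ : Measure E2) [IsProbabilityMeasure μ] (t : ℝ)
    (β : Finset E2) : ENNReal.ofReal (t - ∑ a ∈ β, ∫ x, saving t a x ∂μ) ≤ err μ β := by
  have hint : Integrable (fun x => ∑ a ∈ β, saving t a x) μ :=
    integrable_finsetSum _ fun a _ => integrable_saving μ t a
  have hnonneg (x : E2) : 0 ≤ ∑ a ∈ β, saving t a x :=
    Finset.sum_nonneg fun a _ => saving_nonneg t a x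
  have hpointwise (x : E2) : ENNReal.ofReal t ≤
      (⨅ a ∈ (β : Set E2), ENNReal.ofReal (‖x - a‖ ^ 2)) +
        ENNReal.ofReal (∑ a ∈ β, saving t a x) := by
    rw [← tsub_le_iff_right, ← ENNReal.ofReal_sub _ (hnonneg x)]
    refine le_iInf₂ fun a ha => ENNReal.ofReal_le_ofReal ?_
    have hsingle : saving t a x ≤ ∑ b ∈ β, saving t b x :=
      Finset.single_le_sum (f := fun b => saving t b x) (fun b _ => saving_nonneg t b x) ha
    linarith [le_max_left (t - ‖x - a‖ ^ 2) 0, saving.eq_def t a x]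
  rw [← integral_finsetSum _ fun a _ => integrable_saving μ t a,
    ENNReal.ofReal_sub _ (integral_nonneg hnonneg), tsub_le_iff_right,
    ofReal_integral_eq_lintegral_ofReal hint (.of_forall hnonneg)]
  calc ENNReal.ofReal t = ∫⁻ _, ENNReal.ofReal t ∂μ := by simp
    _ ≤ _ := lintegral_mono hpointwise
    _ = _ := lintegral_add_right _ (by fun_prop)

section Certificate

variable {μ : Measure E2} [IsProbabilityMeasure μ] {t m : ℝ} {n : ℕ} {A : Set E2}

lemma ofReal_sub_mul_le_err (hle : ∀ a, ∫ x, saving t a x ∂μ ≤ m) {β : Finset E2}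
    (hβ : β.card ≤ n) : ENNReal.ofReal (t - n * m) ≤ err μ β := by
  refine le_trans (ENNReal.ofReal_le_ofReal (sub_le_sub_left ?_ t))
    (ofReal_sub_sum_integral_saving_le_err μ t β)
  have hm : 0 ≤ m := (integral_nonneg (saving_nonneg t 0)).trans (hle 0)
  calc ∑ a ∈ β, ∫ x, saving t a x ∂μ ≤ β.card * m := by
        simpa using Finset.sum_le_card_nsmul β _ m fun a _ => hle a
    _ ≤ n * m := by gcongr

lemma quantErr_eq_of_integral_saving_le (hle : ∀ a, ∫ x, saving t a x ∂μ ≤ m) (hA : A.Finite)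
    (hn : A.ncard ≤ n) (herr : err μ A ≤ ENNReal.ofReal (t - n * m)) :
    quantErr μ n = ENNReal.ofReal (t - n * m) := by
  refine le_antisymm ((iInf₂_le A ⟨hA, hn⟩).trans herr) (le_iInf₂ fun β hβ => ?_)
  obtain ⟨hfin, hcard⟩ := hβ
  lift β to Finset E2 using hfin
  exact ofReal_sub_mul_le_err hle (by rwa [Set.ncard_coe_finset] at hcard)

lemma isOptimal_of_integral_saving_le (hle : ∀ a, ∫ x, saving t a x ∂μ ≤ m) (hA : A.Finite)
    (hn : A.ncard ≤ n) (herr : err μ A ≤ ENNReal.ofReal (t - n * m)) : IsOptimal μ n A := by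
  refine ⟨hA, hn, le_antisymm ?_ (iInf₂_le A ⟨hA, hn⟩)⟩
  rwa [quantErr_eq_of_integral_saving_le hle hA hn herr]

lemma eq_of_isOptimal_of_integral_saving_lt (hle : ∀ a, ∫ x, saving t a x ∂μ ≤ m)
    (hlt : ∀ a ∉ A, ∫ x, saving t a x ∂μ < m) (hm : 0 < m) (hnm : 0 ≤ t - n * m)
    (hA : A.Finite) (hn : A.ncard ≤ n) (herr : err μ A ≤ ENNReal.ofReal (t - n * m))
    {β : Set E2} (hβ : IsOptimal μ n β) : β = A := by
  obtain ⟨hfin, hcard, hopt⟩ := hβ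
  lift β to Finset E2 using hfin
  rw [Set.ncard_coe_finset] at hcard
  have htotal : n * m ≤ ∑ a ∈ β, ∫ x, saving t a x ∂μ := by
    have h := ofReal_sub_sum_integral_saving_le_err μ t β
    rw [hopt, quantErr_eq_of_integral_saving_le hle hA hn herr,
      ENNReal.ofReal_le_ofReal_iff hnm] at h
    linarith
  have hsub : (β : Set E2) ⊆ A := by
    intro a ha
    by_contra haA
    have hstrict : ∑ a ∈ β, ∫ x, saving t a x ∂μ < β.card * m := by
      simpa using Finset.sum_lt_sum (fun a _ => hle a) ⟨a, ha, hlt a haA⟩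
    have hcard' : β.card * m ≤ n * m := by gcongr
    linarith
  refine Set.eq_of_subset_of_ncard_le hsub (hn.trans ?_) hA
  have hsum : ∑ a ∈ β, ∫ x, saving t a x ∂μ ≤ β.card * m := by
    simpa using Finset.sum_le_card_nsmul β _ m fun a _ => hle a
  rw [Set.ncard_coe_finset]
  exact_mod_cast le_of_mul_le_mul_right (htotal.trans hsum) hm

end Certificate

end Saving

section SelfSimilar

variable {ι κ X F : Type*} [Fintype ι] [Fintype κ] [MeasurableSpace X] {μ : Measure X}
  {f : ι → X → X} {g : κ → X → X}

/-- `μ` is self-similar for the finite family `f`, all of whose maps carry the same weight: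
`μ` is the average of its push-forwards under the maps `f i`. -/
def IsSelfSimilar (f : ι → X → X) (μ : Measure X) : Prop :=
  μ = (Fintype.card ι : ℝ≥0∞)⁻¹ • ∑ i, μ.map (f i)

namespace IsSelfSimilar

lemma lintegral_le (hμ : IsSelfSimilar f μ) (φ : X → ℝ≥0∞) :
    ∫⁻ x, φ x ∂μ ≤ (Fintype.card ι : ℝ≥0∞)⁻¹ * ∑ i, ∫⁻ x, φ (f i x) ∂μ := by
  conv_lhs => rw [hμ]
  rw [lintegral_smul_measure, lintegral_finsetSum_measure, smul_eq_mul]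
  gcongr _ * ?_
  exact Finset.sum_le_sum fun i _ => lintegral_map_le φ (f i)

lemma integral_eq [NormedAddCommGroup F] [NormedSpace ℝ F] (hμ : IsSelfSimilar f μ)
    (hf : ∀ i, Measurable (f i)) {φ : X → F} (hφ : Integrable φ μ) :
    ∫ x, φ x ∂μ = (Fintype.card ι : ℝ)⁻¹ • ∑ i, ∫ x, φ (f i x) ∂μ := by
  cases isEmpty_or_nonempty ι
  · have hzero : μ = 0 := by simpa [IsSelfSimilar] using hμ
    simp [hzero]
  have hmap : ∀ i ∈ Finset.univ, Integrable φ (μ.map (f i)) := by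
    rw [hμ, integrable_inv_smul_measure (by simp) (by simp), integrable_finsetSum_measure] at hφ
    exact hφ
  conv_lhs => rw [hμ]
  rw [integral_smul_measure, integral_finsetSum_measure hmap]
  simp only [ENNReal.toReal_inv, ENNReal.toReal_natCast]
  congr! 2 with i hi
  exact integral_map (hf i).aemeasurable (hmap i hi).aestronglyMeasurable

lemma comp (hf : IsSelfSimilar f μ) (hg : IsSelfSimilar g μ) (hfm : ∀ i, Measurable (f i))
    (hgm : ∀ j, Measurable (g j)) : IsSelfSimilar (fun p : ι × κ => f p.1 ∘ g p.2) μ := by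
  have hmap (i : ι) : μ.map (f i) =
      (Fintype.card κ : ℝ≥0∞)⁻¹ • ∑ j, μ.map (f i ∘ g j) := by
    conv_lhs => rw [hg]
    rw [Measure.map_smul, Measure.map_finset_sum (hfm i).aemeasurable]
    simp only [Measure.map_map (hfm i) (hgm _)]
  unfold IsSelfSimilar
  conv_lhs => rw [hf]
  rw [Fintype.sum_prod_type, Fintype.card_prod, Nat.cast_mul,
    ENNReal.mul_inv (.inr (by simp)) (.inl (by simp)), mul_smul]
  simp only [hmap, ← Finset.smul_sum]

lemma reindex (hf : IsSelfSimilar f μ) (e : κ ≃ ι) : IsSelfSimilar (fun j => f (e j)) μ := by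
  unfold IsSelfSimilar
  rw [Fintype.card_congr e, e.sum_comp fun i => μ.map (f i)]
  exact hf

lemma measure_le_of_preimage_subset (hμ : IsSelfSimilar f μ) (hf : ∀ i, Measurable (f i))
    {s t : Set X} (hs : MeasurableSet s) (hst : ∀ i, f i ⁻¹' s ⊆ t) : μ s ≤ μ t :=
  calc μ s = (Fintype.card ι : ℝ≥0∞)⁻¹ * ∑ i, μ (f i ⁻¹' s) := by
        conv_lhs => rw [hμ]
        simp [Measure.map_apply (hf _) hs]
    _ ≤ (Fintype.card ι : ℝ≥0∞)⁻¹ * ∑ _ : ι, μ t := by gcongr with i; exact hst i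
    _ ≤ μ t := by
        rw [Finset.sum_const, Finset.card_univ, nsmul_eq_mul, ← mul_assoc]
        exact mul_le_of_le_one_left zero_le (ENNReal.inv_mul_le_one _)

lemma ae_nonpos_of_comp_le [IsFiniteMeasure μ] (hμ : IsSelfSimilar f μ)
    (hf : ∀ i, Measurable (f i)) {d : X → ℝ} (hd : Measurable d) {ρ : ℝ} (hρ0 : 0 ≤ ρ)
    (hρ1 : ρ < 1) (hle : ∀ i x, d (f i x) ≤ ρ * d x) : ∀ᵐ x ∂μ, d x ≤ 0 := by
  have hpow (r : ℝ) (k : ℕ) : μ {x | r ≤ d x} ≤ μ {x | r ≤ ρ ^ k * d x} := by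
    induction k with
    | zero => simp
    | succ k ih =>
      refine ih.trans (hμ.measure_le_of_preimage_subset hf
        (measurableSet_le measurable_const (hd.const_mul _)) fun i x hx => ?_)
      calc r ≤ ρ ^ k * d (f i x) := hx
        _ ≤ ρ ^ k * (ρ * d x) := by gcongr; exact hle i x
        _ = ρ ^ (k + 1) * d x := by ring
  have hlim : TendstoInMeasure μ (fun k x => ρ ^ k * d x) Filter.atTop fun _ => 0 :=
    tendstoInMeasure_of_tendsto_ae (fun k => (hd.const_mul _).aestronglyMeasurable)
      (.of_forall fun x => by
        simpa using (tendsto_pow_atTop_nhds_zero_of_lt_one hρ0 hρ1).mul_const (d x))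
  rw [tendstoInMeasure_iff_norm] at hlim
  have hnull {r : ℝ} (hr : 0 < r) : μ {x | r ≤ d x} = 0 := by
    refine le_antisymm (ge_of_tendsto' (hlim r hr) fun k => (hpow r k).trans ?_) zero_le
    gcongr with x
    rw [sub_zero]
    exact Real.le_norm_self _
  have hlt : ∀ᵐ x ∂μ, ∀ n : ℕ, d x < 1 / (n + 1) := ae_all_iff.2 fun n => by
    simpa [ae_iff] using hnull (Nat.one_div_pos_of_nat (α := ℝ) (n := n))
  filter_upwards [hlt] with x hx
  exact ge_of_tendsto' tendsto_one_div_add_atTop_nhds_zero_nat fun n => (hx n).le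

lemma ae_mem_of_mapsTo {X : Type*} [PseudoMetricSpace X] [MeasurableSpace X] [BorelSpace X]
    {f : ι → X → X} {μ : Measure X} [IsFiniteMeasure μ] (hμ : IsSelfSimilar f μ) {ρ : NNReal}
    (hρ : ρ < 1) (hf : ∀ i, LipschitzWith ρ (f i)) {K : Set X} (hK : IsClosed K)
    (hne : K.Nonempty) (hmaps : ∀ i, Set.MapsTo (f i) K K) : ∀ᵐ x ∂μ, x ∈ K := by
  have hcontract (i : ι) (x : X) : Metric.infDist (f i x) K ≤ ρ * Metric.infDist x K := by
    have := hne.to_subtype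
    rw [Metric.infDist_eq_iInf (x := x), Real.mul_iInf_of_nonneg ρ.coe_nonneg]
    exact le_ciInf fun y => (Metric.infDist_le_dist_of_mem (hmaps i y.2)).trans
      ((hf i).dist_le_mul x y)
  have hnonpos := hμ.ae_nonpos_of_comp_le (fun i => (hf i).continuous.measurable)
    (Metric.continuous_infDist_pt K).measurable ρ.coe_nonneg (by exact_mod_cast hρ) hcontract
  filter_upwards [hnonpos] with x hx
  exact (hK.mem_iff_infDist_zero hne).2 (hx.antisymm Metric.infDist_nonneg)

end IsSelfSimilar

end SelfSimilar

section Simplex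

variable {ι E : Type*}

lemma le_sum_coord_mul_of_convexOn [Fintype ι] [AddCommGroup E] [Module ℝ E]
    (b : AffineBasis ι ℝ E) {f : E → ℝ} (hf : ConvexOn ℝ (convexHull ℝ (Set.range b)) f) {x : E}
    (hx : x ∈ convexHull ℝ (Set.range b)) : f x ≤ ∑ i, b.coord i x * f (b i) := by
  rw [b.convexHull_eq_nonneg_coord] at hx
  have hjensen := hf.map_sum_le (t := Finset.univ) (w := fun i => b.coord i x)
    (fun i _ => hx i) (b.sum_coord_apply_eq_one x)
    fun i _ => subset_convexHull ℝ _ ⟨i, rfl⟩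
  rwa [b.linear_combination_coord_eq_self] at hjensen

variable [NormedAddCommGroup E] [InnerProductSpace ℝ E]

lemma norm_sum_smul_sq_of_pairwise_dist_eq_one {p : ι → E}
    (hp : Pairwise fun i j => dist (p i) (p j) = 1) (s : Finset ι) {w : ι → ℝ}
    (hw : ∑ i ∈ s, w i = 0) : ‖∑ i ∈ s, w i • p i‖ ^ 2 = 1 / 2 * ∑ i ∈ s, w i ^ 2 := by
  classical
  have hdist (i j : ι) : dist (p i) (p j) * dist (p i) (p j) = 1 - if i = j then 1 else 0 := by
    by_cases hij : i = j
    · simp [hij]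
    · simp [hij, hp hij]
  rw [← real_inner_self_eq_norm_sq, ← Finset.weightedVSub_eq_linear_combination s hw,
    EuclideanGeometry.inner_weightedVSub p hw p hw]
  simp only [hdist, mul_sub, mul_one, mul_ite, mul_zero, Finset.sum_sub_distrib, Finset.sum_ite_eq,
    ← Finset.mul_sum, hw, Finset.sum_const_zero, Finset.sum_ite_mem, Finset.inter_self, ← sq]
  ring

lemma affineIndependent_of_pairwise_dist_eq_one {p : ι → E}
    (hp : Pairwise fun i j => dist (p i) (p j) = 1) : AffineIndependent ℝ p := by
  refine affineIndependent_iff.2 fun s w hw hsum i hi => ?_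
  have hsq : ∑ i ∈ s, w i ^ 2 = 0 := by
    simpa [hsum] using norm_sum_smul_sq_of_pairwise_dist_eq_one hp s hw
  exact pow_eq_zero_iff two_ne_zero |>.1
    ((Finset.sum_eq_zero_iff_of_nonneg fun i _ => sq_nonneg (w i)).1 hsq i hi)

lemma norm_sub_sq_eq_sum_coord_sub_sq [Fintype ι] (b : AffineBasis ι ℝ E)
    (hb : Pairwise fun i j => dist (b i) (b j) = 1) (x y : E) :
    ‖x - y‖ ^ 2 = 1 / 2 * ∑ i, (b.coord i x - b.coord i y) ^ 2 := by
  have hw : ∑ i, (b.coord i x - b.coord i y) = 0 := by simp [Finset.sum_sub_distrib]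
  rw [← norm_sum_smul_sq_of_pairwise_dist_eq_one hb Finset.univ hw]
  simp only [sub_smul, Finset.sum_sub_distrib, b.linear_combination_coord_eq_self]

end Simplex

section Triangle

/-- The vertices of the triangle `Tri`, which are the fixed points of the maps `Smap i`. -/
def vertex : Fin 3 → E2 := ![pt 0 0, pt 1 0, pt (1 / 2) (Real.sqrt 3 / 2)]

lemma norm_pt_sub_pt_sq (a b a' b' : ℝ) :
    ‖pt a b - pt a' b'‖ ^ 2 = (a - a') ^ 2 + (b - b') ^ 2 := by
  simp [pt, EuclideanSpace.norm_sq_eq, Fin.sum_univ_two]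

lemma pairwise_dist_vertex_eq_one : Pairwise fun i j => dist (vertex i) (vertex j) = 1 := by
  have hsqrt : Real.sqrt 3 ^ 2 = 3 := Real.sq_sqrt (by norm_num)
  intro i j hij
  rw [dist_eq_norm, ← sq_eq_sq₀ (norm_nonneg _) zero_le_one]
  fin_cases i <;> fin_cases j <;> first | exact absurd rfl hij | skip
  all_goals norm_num [vertex, norm_pt_sub_pt_sq, div_pow, hsqrt]

/-- The vertices of `Tri` as an affine basis of the plane; its coordinates are the barycentric
coordinates of the triangle. -/
def vertexBasis : AffineBasis (Fin 3) ℝ E2 where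
  toFun := vertex
  ind' := affineIndependent_of_pairwise_dist_eq_one pairwise_dist_vertex_eq_one
  tot' := by
    rw [(affineIndependent_of_pairwise_dist_eq_one
      pairwise_dist_vertex_eq_one).affineSpan_eq_top_iff_card_eq_finrank_add_one]
    simp

lemma coe_vertexBasis : ⇑vertexBasis = vertex := rfl

lemma Tri_eq_convexHull_range : Tri = convexHull ℝ (Set.range vertexBasis) := by
  rw [coe_vertexBasis, vertex, Matrix.range_cons, Matrix.range_cons_cons_empty]
  rfl

lemma mem_Tri_iff {x : E2} : x ∈ Tri ↔ ∀ i, 0 ≤ vertexBasis.coord i x := by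
  rw [Tri_eq_convexHull_range, vertexBasis.convexHull_eq_nonneg_coord, Set.mem_ofPred_eq]

lemma vertex_mem_Tri (i : Fin 3) : vertex i ∈ Tri := by
  rw [Tri_eq_convexHull_range]
  exact subset_convexHull ℝ _ ⟨i, rfl⟩

lemma isCompact_Tri : IsCompact Tri := by
  rw [Tri_eq_convexHull_range]
  exact (Set.finite_range _).isCompact_convexHull ℝ

lemma convex_Tri : Convex ℝ Tri := convex_convexHull ℝ _

lemma Smap_eq_homothety (i : Fin 3) : Smap i = AffineMap.homothety (vertex i) (1 / 3 : ℝ) := by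
  ext x j
  fin_cases i <;> fin_cases j <;>
    simp [Smap, S1, S2, S3, vertex, pt, AffineMap.homothety_apply] <;> ring

lemma Smap_apply (i : Fin 3) (x : E2) :
    Smap i x = (2 / 3 : ℝ) • vertex i + (1 / 3 : ℝ) • x := by
  rw [Smap_eq_homothety, AffineMap.homothety_eq_lineMap, AffineMap.lineMap_apply_module]
  norm_num

lemma Smap_sub_Smap (i : Fin 3) (x y : E2) : Smap i x - Smap i y = (1 / 3 : ℝ) • (x - y) := by
  rw [Smap_apply, Smap_apply, add_sub_add_left_eq_sub, smul_sub]

lemma lipschitzWith_Smap (i : Fin 3) : LipschitzWith (1 / 3) (Smap i) :=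
  .of_dist_le_mul fun x y => by
    rw [dist_eq_norm, dist_eq_norm, Smap_sub_Smap, norm_smul]
    norm_num

lemma measurable_Smap (i : Fin 3) : Measurable (Smap i) :=
  (lipschitzWith_Smap i).continuous.measurable

lemma mapsTo_Smap_Tri (i : Fin 3) : Set.MapsTo (Smap i) Tri Tri := fun x hx => by
  rw [Smap_apply]
  exact convex_Tri (vertex_mem_Tri i) hx (by norm_num) (by norm_num) (by norm_num)

lemma coord_Smap (i j : Fin 3) (x : E2) : vertexBasis.coord i (Smap j x) =
    2 / 3 * (if i = j then 1 else 0) + 1 / 3 * vertexBasis.coord i x := by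
  rw [Smap_eq_homothety, AffineMap.homothety_eq_lineMap, AffineMap.apply_lineMap,
    ← coe_vertexBasis, AffineBasis.coord_apply, AffineMap.lineMap_apply_module]
  norm_num

lemma norm_sub_sq_eq_sum_coord (x y : E2) : ‖x - y‖ ^ 2 =
    1 / 2 * ∑ i, (vertexBasis.coord i x - vertexBasis.coord i y) ^ 2 :=
  norm_sub_sq_eq_sum_coord_sub_sq vertexBasis pairwise_dist_vertex_eq_one x y

lemma coord_sub_coord_sq_le (i : Fin 3) (x y : E2) :
    (vertexBasis.coord i x - vertexBasis.coord i y) ^ 2 ≤ 4 / 3 * ‖x - y‖ ^ 2 := by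
  rw [norm_sub_sq_eq_sum_coord]
  set d : Fin 3 → ℝ := fun k => vertexBasis.coord k x - vertexBasis.coord k y
  have hd : ∑ k, d k = 0 := by simp [d, Finset.sum_sub_distrib]
  have hothers : (∑ k ∈ Finset.univ.erase i, d k) ^ 2 ≤
      (Finset.univ.erase i).card * ∑ k ∈ Finset.univ.erase i, d k ^ 2 :=
    sq_sum_le_card_mul_sum_sq
  rw [Finset.sum_erase_eq_sub (Finset.mem_univ i), Finset.sum_erase_eq_sub (Finset.mem_univ i), hd,
    Finset.card_erase_of_mem (Finset.mem_univ i), Finset.card_univ, Fintype.card_fin] at hothers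
  push_cast at hothers
  linarith

lemma one_third_le_norm_Smap_sub_Smap {i j : Fin 3} (hij : i ≠ j) {x y : E2} (hx : x ∈ Tri)
    (hy : y ∈ Tri) : 1 / 3 ≤ ‖Smap i x - Smap j y‖ := by
  have hgap {k l : Fin 3} (hkl : k ≠ l) {u v : E2} (hu : u ∈ Tri) (hv : v ∈ Tri) :
      1 / 3 ≤ vertexBasis.coord k (Smap k u) - vertexBasis.coord k (Smap l v) := by
    have hv' : vertexBasis.coord k v ≤ 1 := by
      rw [← vertexBasis.sum_coord_apply_eq_one v]
      exact Finset.single_le_sum (fun m _ => mem_Tri_iff.1 hv m) (Finset.mem_univ k)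
    rw [coord_Smap, coord_Smap, if_pos rfl, if_neg hkl]
    linarith [mem_Tri_iff.1 hu k]
  rw [← sq_le_sq₀ (by norm_num) (norm_nonneg _), norm_sub_sq_eq_sum_coord]
  have hterms := Finset.add_le_sum (fun k _ => sq_nonneg
    (vertexBasis.coord k (Smap i x) - vertexBasis.coord k (Smap j y))) (Finset.mem_univ i)
    (Finset.mem_univ j) hij
  nlinarith [hgap hij hx hy, hgap hij.symm hy hx]

/-- The centre `c` of the triangle `Tri`. -/
def centroid : E2 := pt (1 / 2) (Real.sqrt 3 / 6)

lemma centroid_eq_smul_sum : centroid = (1 / 3 : ℝ) • ∑ i, vertex i := by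
  ext j
  fin_cases j <;> simp [centroid, vertex, pt, Fin.sum_univ_three] <;> ring

lemma coord_centroid (i : Fin 3) : vertexBasis.coord i centroid = 1 / 3 := by
  have hw : ∑ _ : Fin 3, (1 / 3 : ℝ) = 1 := by norm_num
  rw [← vertexBasis.coord_apply_combination_of_mem (Finset.mem_univ i) hw,
    Finset.affineCombination_eq_linear_combination _ _ _ hw, centroid_eq_smul_sum,
    Finset.smul_sum, coe_vertexBasis]

lemma norm_sub_centroid_sq (a : E2) :
    ‖a - centroid‖ ^ 2 = 1 / 2 * ∑ i, vertexBasis.coord i a ^ 2 - 1 / 6 := by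
  have hsum := vertexBasis.sum_coord_apply_eq_one a
  rw [norm_sub_sq_eq_sum_coord]
  simp only [coord_centroid, Fin.sum_univ_three] at hsum ⊢
  linear_combination (-1 / 3) * hsum

lemma norm_vertex_sub_sq (i : Fin 3) (a : E2) :
    ‖vertex i - a‖ ^ 2 = ‖a - centroid‖ ^ 2 + 2 / 3 - vertexBasis.coord i a := by
  rw [norm_sub_centroid_sq, norm_sub_sq_eq_sum_coord]
  simp only [← coe_vertexBasis, AffineBasis.coord_apply, sub_sq, Finset.sum_add_distrib,
    Finset.sum_sub_distrib, ite_pow, one_pow, mul_ite, ite_mul, mul_one, mul_zero, zero_mul,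
    zero_pow two_ne_zero, Finset.sum_ite_eq', Finset.mem_univ, if_true]
  ring

lemma norm_sub_centroid_sq_le {r : ℝ} {a : E2}
    (ha : ∀ i, 1 / 3 - r ≤ vertexBasis.coord i a) : ‖a - centroid‖ ^ 2 ≤ 3 * r ^ 2 := by
  have hsum := vertexBasis.sum_coord_apply_eq_one a
  rw [norm_sub_centroid_sq]
  rw [Fin.sum_univ_three] at hsum ⊢
  have h := eq_sub_of_add_eq' hsum
  have h0 := ha 0
  have h1 := ha 1
  have h2 := ha 2
  rw [h] at h2 ⊢
  nlinarith [mul_nonneg (sub_nonneg.2 (ha 0)) (sub_nonneg.2 (ha 1)),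
    mul_nonneg (sub_nonneg.2 (ha 0)) (sub_nonneg.2 (ha 2)),
    mul_nonneg (sub_nonneg.2 (ha 1)) (sub_nonneg.2 (ha 2))]

lemma exists_forall_le_norm_Smap_sub_sq {a z : E2} (hza : ‖z - a‖ ^ 2 < 1 / 2)
    (hz : ∀ y ∈ Tri, 1 ≤ ‖z - y‖) : ∃ i, ∀ x ∈ Tri, 1 / 2 ≤ ‖Smap i x - a‖ ^ 2 := by
  -- If `a` came within `√(1/2)` of every cell, the point two thirds of the way from `centroid` to
  -- `a` would lie in `Tri`, at distance less than `√(1/2) + √(3/4) / 3 < 1` from `z`.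
  by_contra! hhit
  have hcoord (i : Fin 3) : -(1 / 6) ≤ vertexBasis.coord i a := by
    obtain ⟨x, hx, hxa⟩ := hhit i
    have hcell : 2 / 3 ≤ vertexBasis.coord i (Smap i x) := by
      rw [coord_Smap, if_pos rfl]
      linarith [mem_Tri_iff.1 hx i]
    nlinarith [coord_sub_coord_sq_le i (Smap i x) a]
  have hac : ‖a - centroid‖ ^ 2 ≤ 3 * (1 / 2) ^ 2 :=
    norm_sub_centroid_sq_le fun i => by linarith [hcoord i]
  set y := AffineMap.lineMap centroid a (2 / 3 : ℝ) with hy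
  have hyTri : y ∈ Tri := mem_Tri_iff.2 fun i => by
    rw [hy, AffineMap.apply_lineMap, AffineMap.lineMap_apply_module, coord_centroid, smul_eq_mul,
      smul_eq_mul]
    linarith [hcoord i]
  have hay : ‖a - y‖ = 1 / 3 * ‖a - centroid‖ := by
    rw [← dist_eq_norm, dist_comm, hy, dist_lineMap_right, dist_eq_norm']
    norm_num
  have htriangle := norm_sub_le_norm_sub_add_norm_sub z a y
  have hza' : ‖z - a‖ < 0.71 := lt_of_pow_lt_pow_left₀ 2 (by norm_num) (by linarith)
  have hac' : ‖a - centroid‖ < 0.87 := lt_of_pow_lt_pow_left₀ 2 (by norm_num) (by linarith)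
  linarith [hz y hyTri]

lemma sum_excess_vertex_le (a : E2) :
    ∑ i, excess (1 / 2) a (vertex i) ≤ 3 * ‖a - centroid‖ ^ 2 := by
  have hsum := vertexBasis.sum_coord_apply_eq_one a
  have hsq := norm_sub_centroid_sq a
  set k : ℝ := ‖a - centroid‖ ^ 2 + 1 / 6 with hk
  have : 0 < k := by positivity
  -- For `k > 0` the quadratic `(2k - s)² / (4k)` dominates `max (k - s) 0`, and summed over the
  -- barycentric coordinates `s` of `a` it gives exactly `3k - 1/2`.
  have hterm (i : Fin 3) :
      excess (1 / 2) a (vertex i) ≤ (2 * k - vertexBasis.coord i a) ^ 2 / (4 * k) := by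
    rw [excess, norm_vertex_sub_sq]
    refine max_le ?_ (by positivity)
    rw [le_div_iff₀ (by positivity)]
    nlinarith [sq_nonneg (vertexBasis.coord i a)]
  refine (Finset.sum_le_sum fun i _ => hterm i).trans_eq ?_
  rw [← Finset.sum_div, div_eq_iff (by positivity)]
  simp only [Fin.sum_univ_three] at hsum hsq ⊢
  linear_combination -4 * k * hsum - 2 * hsq

lemma norm_Smap_vertex_sub_sq {i j : Fin 3} (hij : i ≠ j) (a : E2) :
    ‖Smap i (vertex j) - a‖ ^ 2 =
      2 / 3 * ‖vertex i - a‖ ^ 2 + 1 / 3 * ‖vertex j - a‖ ^ 2 - 2 / 9 := by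
  rw [Smap_apply, norm_smul_add_smul_sub_sq (by norm_num), ← dist_eq_norm (vertex i) (vertex j),
    pairwise_dist_vertex_eq_one hij]
  norm_num

lemma excess_Smap_vertex_le (t : ℝ) (a : E2) (i j : Fin 3) : excess t a (Smap i (vertex j)) ≤
    2 / 3 * excess t a (vertex i) + 1 / 3 * excess t a (vertex j) := by
  rw [Smap_apply]
  exact (convexOn_excess t a).2 trivial trivial (by norm_num) (by norm_num) (by norm_num)

lemma excess_Smap_vertex_lt {t : ℝ} {a : E2} {i j : Fin 3} (hij : i ≠ j)
    (hi : 0 < excess t a (vertex i)) : excess t a (Smap i (vertex j)) <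
      2 / 3 * excess t a (vertex i) + 1 / 3 * excess t a (vertex j) := by
  have hj := excess_nonneg t a (vertex j)
  refine max_lt ?_ (by linarith)
  rw [norm_Smap_vertex_sub_sq hij]
  have hi' : ‖vertex i - a‖ ^ 2 - t ≤ excess t a (vertex i) := le_max_left _ _
  have hj' : ‖vertex j - a‖ ^ 2 - t ≤ excess t a (vertex j) := le_max_left _ _
  linarith

lemma sum_sum_two_thirds_mul_add_one_third_mul (e : Fin 3 → ℝ) :
    ∑ i, ∑ j, (2 / 3 * e i + 1 / 3 * e j) = 3 * ∑ i, e i := by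
  simp only [Fin.sum_univ_three]
  ring

lemma sum_sum_excess_Smap_vertex_le (a : E2) :
    ∑ i, ∑ j, excess (1 / 2) a (Smap i (vertex j)) ≤ 9 * ‖a - centroid‖ ^ 2 := by
  have hsum := Finset.sum_le_sum fun i (_ : i ∈ Finset.univ) =>
    Finset.sum_le_sum fun j (_ : j ∈ Finset.univ) => excess_Smap_vertex_le (1 / 2) a i j
  rw [sum_sum_two_thirds_mul_add_one_third_mul] at hsum
  linarith [sum_excess_vertex_le a]

lemma sum_sum_excess_Smap_vertex_lt {a : E2} (ha : a ≠ centroid) :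
    ∑ i, ∑ j, excess (1 / 2) a (Smap i (vertex j)) < 9 * ‖a - centroid‖ ^ 2 := by
  by_cases hpos : ∃ i, 0 < excess (1 / 2) a (vertex i)
  · obtain ⟨i, hi⟩ := hpos
    obtain ⟨j, hij⟩ := exists_ne i
    have hsum := Finset.sum_lt_sum
      (fun k _ => Finset.sum_le_sum fun l (_ : l ∈ Finset.univ) =>
        excess_Smap_vertex_le (1 / 2) a k l)
      ⟨i, Finset.mem_univ i, Finset.sum_lt_sum (fun l _ => excess_Smap_vertex_le (1 / 2) a i l)
        ⟨j, Finset.mem_univ j, excess_Smap_vertex_lt hij.symm hi⟩⟩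
    rw [sum_sum_two_thirds_mul_add_one_third_mul] at hsum
    linarith [sum_excess_vertex_le a]
  · push Not at hpos
    have hdist : 0 < ‖a - centroid‖ ^ 2 := pow_pos (norm_pos_iff.2 (sub_ne_zero.2 ha)) 2
    refine lt_of_le_of_lt (Finset.sum_nonpos fun i _ => Finset.sum_nonpos fun j _ => ?_)
      (mul_pos (by norm_num) hdist)
    linarith [excess_Smap_vertex_le (1 / 2) a i j, hpos i, hpos j]

end Triangle

section RMeasure

variable {P : Measure E2} [IsProbabilityMeasure P]

lemma ae_mem_Tri (hP : IsSelfSimilar Smap P) : ∀ᵐ x ∂P, x ∈ Tri :=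
  hP.ae_mem_of_mapsTo (by norm_num) lipschitzWith_Smap isCompact_Tri.isClosed
    ⟨vertex 0, vertex_mem_Tri 0⟩ mapsTo_Smap_Tri

lemma integrable_of_continuous {F : Type*} [NormedAddCommGroup F] [SecondCountableTopology F]
    (hP : IsSelfSimilar Smap P) {f : E2 → F} (hf : Continuous f) : Integrable f P := by
  rw [← Measure.restrict_eq_self_of_ae_mem (ae_mem_Tri hP)]
  exact hf.continuousOn.integrableOn_compact isCompact_Tri

lemma integral_eq_sum_integral_Smap {F : Type*} [NormedAddCommGroup F] [NormedSpace ℝ F]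
    [SecondCountableTopology F] (hP : IsSelfSimilar Smap P) {f : E2 → F} (hf : Continuous f) :
    ∫ x, f x ∂P = (1 / 3 : ℝ) • ∑ i, ∫ x, f (Smap i x) ∂P := by
  simpa using hP.integral_eq measurable_Smap (integrable_of_continuous hP hf)

lemma integral_id_eq_centroid (hP : IsSelfSimilar Smap P) : ∫ x, x ∂P = centroid := by
  have hmean (i : Fin 3) :
      ∫ x, Smap i x ∂P = (2 / 3 : ℝ) • vertex i + (1 / 3 : ℝ) • ∫ x, x ∂P := by
    simp only [Smap_apply]
    rw [integral_add (integrable_const _) (integrable_of_continuous hP (by fun_prop)),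
      integral_const, probReal_univ, one_smul, integral_smul]
  have hinv := integral_eq_sum_integral_Smap hP (f := fun x => x) continuous_id
  simp only [hmean, Finset.sum_add_distrib, ← Finset.smul_sum] at hinv
  simp only [Finset.sum_const, Finset.card_univ, Fintype.card_fin] at hinv
  rw [centroid_eq_smul_sum]
  linear_combination (norm := module) (3 / 2 : ℝ) • hinv

lemma integral_norm_sub_sq (hP : IsSelfSimilar Smap P) (a : E2) :
    ∫ x, ‖x - a‖ ^ 2 ∂P = ∫ x, ‖x - centroid‖ ^ 2 ∂P + ‖a - centroid‖ ^ 2 := by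
  have hsteiner := integral_norm_sub_sq_eq_add (integrable_of_continuous hP continuous_id)
    (integrable_of_continuous hP (f := fun x => ‖x - ∫ y, y ∂P‖ ^ 2) (by fun_prop)) a
  rwa [integral_id_eq_centroid hP, norm_sub_rev centroid] at hsteiner

lemma integral_norm_sub_centroid_sq (hP : IsSelfSimilar Smap P) :
    ∫ x, ‖x - centroid‖ ^ 2 ∂P = 1 / 6 := by
  have hcell (i : Fin 3) : ∫ x, ‖Smap i x - centroid‖ ^ 2 ∂P =
      1 / 9 * (∫ x, ‖x - centroid‖ ^ 2 ∂P + 4 / 3) := by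
    have hscale (x : E2) : ‖Smap i x - centroid‖ ^ 2 =
        1 / 9 * ‖x - ((3 : ℝ) • centroid - (2 : ℝ) • vertex i)‖ ^ 2 := by
      have h : Smap i x - centroid =
          (1 / 3 : ℝ) • (x - ((3 : ℝ) • centroid - (2 : ℝ) • vertex i)) := by
        rw [Smap_apply]
        module
      rw [h, norm_smul, mul_pow]
      norm_num
    have hcentre : (3 : ℝ) • centroid - (2 : ℝ) • vertex i - centroid =
        (-2 : ℝ) • (vertex i - centroid) := by module
    simp only [hscale, integral_const_mul]
    rw [integral_norm_sub_sq hP, hcentre, norm_smul, mul_pow, norm_vertex_sub_sq, coord_centroid]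
    norm_num
  have hinv := integral_eq_sum_integral_Smap hP (f := fun x => ‖x - centroid‖ ^ 2) (by fun_prop)
  simp only [hcell, Finset.sum_const, Finset.card_univ, Fintype.card_fin, smul_eq_mul,
    nsmul_eq_mul, Nat.cast_ofNat] at hinv
  linarith

lemma integral_coord (hP : IsSelfSimilar Smap P) (i : Fin 3) :
    ∫ x, vertexBasis.coord i x ∂P = 1 / 3 := by
  have hcoord (x : E2) : vertexBasis.coord i x =
      ‖x - centroid‖ ^ 2 + 2 / 3 - ‖x - vertex i‖ ^ 2 := by
    rw [norm_sub_rev x (vertex i), norm_vertex_sub_sq]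
    ring
  have hint (a : E2) : Integrable (fun x => ‖x - a‖ ^ 2) P :=
    integrable_of_continuous hP (by fun_prop)
  simp only [hcoord]
  rw [integral_sub (integrable_of_continuous hP (by fun_prop)) (hint _),
    integral_add (hint _) (integrable_const _), integral_norm_sub_sq hP (vertex i),
    norm_vertex_sub_sq, coord_centroid]
  norm_num

lemma integral_le_of_convexOn (hP : IsSelfSimilar Smap P) {f : E2 → ℝ}
    (hf : ConvexOn ℝ Set.univ f) (hcont : Continuous f) :
    ∫ x, f x ∂P ≤ 1 / 3 * ∑ i, f (vertex i) := by
  have hterm (i : Fin 3) : Integrable (fun x => vertexBasis.coord i x * f (vertex i)) P :=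
    (integrable_of_continuous hP (vertexBasis.coord i).continuous_of_finiteDimensional).mul_const _
  calc ∫ x, f x ∂P ≤ ∫ x, ∑ i, vertexBasis.coord i x * f (vertex i) ∂P := by
        refine integral_mono_ae (integrable_of_continuous hP hcont)
          (integrable_finsetSum _ fun i _ => hterm i) ?_
        filter_upwards [ae_mem_Tri hP] with x hx
        rw [Tri_eq_convexHull_range] at hx
        exact le_sum_coord_mul_of_convexOn vertexBasis
          (hf.subset (Set.subset_univ _) (convex_convexHull ℝ _)) hx
    _ = 1 / 3 * ∑ i, f (vertex i) := by
        rw [integral_finsetSum _ fun i _ => hterm i, Finset.mul_sum]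
        simp only [integral_mul_const, integral_coord hP]

lemma integral_le_of_convexOn_level_one (hP : IsSelfSimilar Smap P) {f : E2 → ℝ}
    (hf : ConvexOn ℝ Set.univ f) (hcont : Continuous f) :
    ∫ x, f x ∂P ≤ 1 / 9 * ∑ i, ∑ j, f (Smap i (vertex j)) := by
  have hcell (i : Fin 3) : ∫ x, f (Smap i x) ∂P ≤ 1 / 3 * ∑ j, f (Smap i (vertex j)) := by
    refine integral_le_of_convexOn hP (f := f ∘ Smap i) ?_
      (hcont.comp (lipschitzWith_Smap i).continuous)
    rw [Smap_eq_homothety]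
    exact hf.comp_affineMap _
  rw [integral_eq_sum_integral_Smap hP hcont, smul_eq_mul]
  have hsum := Finset.sum_le_sum fun i (_ : i ∈ Finset.univ) => hcell i
  rw [← Finset.mul_sum] at hsum
  linarith

lemma integral_saving_eq (hP : IsSelfSimilar Smap P) (t : ℝ) (a : E2) :
    ∫ x, saving t a x ∂P = t - 1 / 6 - ‖a - centroid‖ ^ 2 + ∫ x, excess t a x ∂P := by
  have hsq : Integrable (fun x => ‖x - a‖ ^ 2) P := integrable_of_continuous hP (by fun_prop)
  simp only [saving_eq_add_excess]
  rw [integral_add (integrable_of_continuous hP (by fun_prop))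
      (integrable_of_continuous hP (continuous_excess t a)),
    integral_sub (integrable_const t) hsq, integral_norm_sub_sq hP,
    integral_norm_sub_centroid_sq hP, integral_const, probReal_univ, one_smul]
  ring

lemma integral_saving_le_one_third (hP : IsSelfSimilar Smap P) (a : E2) :
    ∫ x, saving (1 / 2) a x ∂P ≤ 1 / 3 := by
  rw [integral_saving_eq hP]
  linarith [integral_le_of_convexOn_level_one hP (convexOn_excess (1 / 2) a)
    (continuous_excess (1 / 2) a), sum_sum_excess_Smap_vertex_le a]

lemma integral_saving_lt_one_third (hP : IsSelfSimilar Smap P) {a : E2} (ha : a ≠ centroid) :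
    ∫ x, saving (1 / 2) a x ∂P < 1 / 3 := by
  rw [integral_saving_eq hP]
  linarith [integral_le_of_convexOn_level_one hP (convexOn_excess (1 / 2) a)
    (continuous_excess (1 / 2) a), sum_sum_excess_Smap_vertex_lt ha]

lemma exists_mem_Tri_integral_le (hP : IsSelfSimilar Smap P) {f : E2 → ℝ} (hf : Continuous f) :
    ∃ x ∈ Tri, ∫ y, f y ∂P ≤ f x := by
  obtain ⟨x, hx, hle⟩ :=
    exists_notMem_null_integral_le (integrable_of_continuous hP hf) (ae_iff.1 (ae_mem_Tri hP))
  exact ⟨x, not_not.1 hx, hle⟩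

lemma exists_integral_saving_lt_of_missed_cell (hP : IsSelfSimilar Smap P) {t : ℝ} {a : E2}
    {i : Fin 3} (hi : ∀ x ∈ Tri, t ≤ ‖Smap i x - a‖ ^ 2) (hpos : 0 < ∫ x, saving t a x ∂P) :
    ∃ m ∈ Tri, ∫ x, saving t a x ∂P < 2 / 3 * (t - ‖m - a‖ ^ 2) := by
  obtain ⟨j, k, hjk, hothers⟩ : ∃ j k, j ≠ k ∧ Finset.univ.erase i = {j, k} :=
    Finset.card_eq_two.1 (by simp [Finset.card_erase_of_mem])
  choose y hyTri hy using fun l : Fin 3 => exists_mem_Tri_integral_le hP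
    ((continuous_saving t a).comp (lipschitzWith_Smap l).continuous)
  have hzero : saving t a (Smap i (y i)) = 0 :=
    max_eq_right (sub_nonpos.2 (hi _ (hyTri i)))
  have hle : ∫ x, saving t a x ∂P ≤
      1 / 3 * (saving t a (Smap j (y j)) + saving t a (Smap k (y k))) := by
    rw [integral_eq_sum_integral_Smap hP (continuous_saving t a), smul_eq_mul,
      ← Finset.sum_pair (f := fun l => saving t a (Smap l (y l))) hjk, ← hothers,
      Finset.sum_erase (f := fun l => saving t a (Smap l (y l))) _ hzero]
    gcongr with l
    exact hy l
  have hne : Smap j (y j) ≠ Smap k (y k) := fun h => by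
    have := one_third_le_norm_Smap_sub_Smap hjk (hyTri j) (hyTri k)
    norm_num [h] at this
  obtain ⟨m, hm, hlt⟩ :=
    exists_mem_segment_saving_add_saving_lt hne (t := t) (a := a) (by linarith)
  exact ⟨m, convex_Tri.segment_subset (mapsTo_Smap_Tri j (hyTri j)) (mapsTo_Smap_Tri k (hyTri k))
    hm, by linarith⟩

end RMeasure

section SeparatedCentres

variable {P : Measure E2} [IsProbabilityMeasure P]

lemma exists_integral_saving_lt_of_separated (hP : IsSelfSimilar Smap P) {a a' : E2}
    (hsep : ∀ x ∈ Tri, ∀ y ∈ Tri, 1 ≤ ‖x - a - (y - a')‖)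
    (ha : 0 < ∫ x, saving (1 / 2) a x ∂P) (ha' : 0 < ∫ x, saving (1 / 2) a' x ∂P) :
    ∃ m ∈ Tri, ∫ x, saving (1 / 2) a x ∂P < 2 / 3 * (1 / 2 - ‖m - a‖ ^ 2) := by
  obtain ⟨x, hx, hle⟩ := exists_mem_Tri_integral_le hP (continuous_saving (1 / 2) a')
  obtain ⟨i, hi⟩ := exists_forall_le_norm_Smap_sub_sq (a := a) (z := x - a' + a)
    (by simpa using saving_pos_iff.1 (ha'.trans_le hle)) fun y hy => by
      have h := hsep y hy x hx
      rwa [norm_sub_rev, ← sub_add, sub_add_eq_add_sub] at h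
  exact exists_integral_saving_lt_of_missed_cell hP hi ha

variable {ι : Type*} [Fintype ι] {b : ι → E2}

lemma sum_integral_saving_lt_of_two_pos (hP : IsSelfSimilar Smap P)
    (hsep : Pairwise fun i j => ∀ x ∈ Tri, ∀ y ∈ Tri, 1 ≤ ‖x - b i - (y - b j)‖) {i j : ι}
    (hij : i ≠ j) (hi : 0 < ∫ x, saving (1 / 2) (b i) x ∂P)
    (hj : 0 < ∫ x, saving (1 / 2) (b j) x ∂P) :
    ∑ k, ∫ x, saving (1 / 2) (b k) x ∂P < 1 / 3 := by
  classical
  set K : Finset ι := {k | 0 < ∫ x, saving (1 / 2) (b k) x ∂P} with hK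
  have hmem (k : ι) : k ∈ K ↔ 0 < ∫ x, saving (1 / 2) (b k) x ∂P := by simp [hK]
  have hexists (k : ι) (hk : k ∈ K) : ∃ m ∈ Tri,
      ∫ x, saving (1 / 2) (b k) x ∂P < 2 / 3 * (1 / 2 - ‖m - b k‖ ^ 2) := by
    obtain ⟨l, hl, hlk⟩ : ∃ l ∈ K, l ≠ k := by
      by_cases hik : i = k
      · exact ⟨j, (hmem j).2 hj, hik ▸ hij.symm⟩
      · exact ⟨i, (hmem i).2 hi, hik⟩
    exact exists_integral_saving_lt_of_separated hP (hsep hlk.symm) ((hmem k).1 hk)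
      ((hmem l).1 hl)
  choose! m hmTri hm using hexists
  have hne : K.Nonempty := ⟨i, (hmem i).2 hi⟩
  have hpairwise : (K : Set ι).Pairwise fun k l =>
      2 * (1 / 2 : ℝ) ≤ ‖(m k - b k) - (m l - b l)‖ ^ 2 := fun k hk l hl hkl => by
    have := hsep hkl _ (hmTri k hk) _ (hmTri l hl)
    nlinarith
  calc ∑ k, ∫ x, saving (1 / 2) (b k) x ∂P = ∑ k ∈ K, ∫ x, saving (1 / 2) (b k) x ∂P :=
        (Finset.sum_filter_of_ne fun k _ hk =>
          (integral_nonneg fun x => saving_nonneg _ _ x).lt_of_ne' hk).symm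
    _ < ∑ k ∈ K, 2 / 3 * (1 / 2 - ‖m k - b k‖ ^ 2) := Finset.sum_lt_sum_of_nonempty hne hm
    _ ≤ 2 / 3 * (1 / 2) := by
        rw [← Finset.mul_sum]
        gcongr
        exact sum_sub_norm_sq_le_of_pairwise hne _ hpairwise
    _ = 1 / 3 := by norm_num

lemma sum_integral_saving_lt_or_exists_eq (hP : IsSelfSimilar Smap P)
    (hsep : Pairwise fun i j => ∀ x ∈ Tri, ∀ y ∈ Tri, 1 ≤ ‖x - b i - (y - b j)‖) :
    ∑ k, ∫ x, saving (1 / 2) (b k) x ∂P < 1 / 3 ∨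
      ∃ i, ∑ k, ∫ x, saving (1 / 2) (b k) x ∂P = ∫ x, saving (1 / 2) (b i) x ∂P := by
  have hnonneg (k : ι) : 0 ≤ ∫ x, saving (1 / 2) (b k) x ∂P :=
    integral_nonneg fun x => saving_nonneg _ _ x
  by_cases hpos : ∃ i, 0 < ∫ x, saving (1 / 2) (b i) x ∂P
  · obtain ⟨i, hi⟩ := hpos
    by_cases hother : ∃ j ≠ i, 0 < ∫ x, saving (1 / 2) (b j) x ∂P
    · obtain ⟨j, hji, hj⟩ := hother
      exact .inl (sum_integral_saving_lt_of_two_pos hP hsep hji hj hi)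
    · push Not at hother
      exact .inr ⟨i, Fintype.sum_eq_single i fun k hk => (hother k hk).antisymm (hnonneg k)⟩
  · push Not at hpos
    exact .inl ((Finset.sum_nonpos fun k _ => hpos k).trans_lt (by norm_num))

lemma sum_integral_saving_le_one_third (hP : IsSelfSimilar Smap P)
    (hsep : Pairwise fun i j => ∀ x ∈ Tri, ∀ y ∈ Tri, 1 ≤ ‖x - b i - (y - b j)‖) :
    ∑ k, ∫ x, saving (1 / 2) (b k) x ∂P ≤ 1 / 3 := by
  obtain hlt | ⟨i, heq⟩ := sum_integral_saving_lt_or_exists_eq hP hsep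
  · exact hlt.le
  · exact heq.trans_le (integral_saving_le_one_third hP (b i))

lemma sum_integral_saving_lt_one_third (hP : IsSelfSimilar Smap P)
    (hsep : Pairwise fun i j => ∀ x ∈ Tri, ∀ y ∈ Tri, 1 ≤ ‖x - b i - (y - b j)‖)
    (hb : ∀ i, b i ≠ centroid) : ∑ k, ∫ x, saving (1 / 2) (b k) x ∂P < 1 / 3 := by
  obtain hlt | ⟨i, heq⟩ := sum_integral_saving_lt_or_exists_eq hP hsep
  · exact hlt
  · exact heq.trans_lt (integral_saving_lt_one_third hP (hb i))

end SeparatedCentres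

section Words

variable {k : ℕ}

lemma Sword_zero (ω : Fin 0 → Fin 3) (x : E2) : Sword ω x = x := by
  simp [Sword]

lemma Sword_cons (i : Fin 3) (ω : Fin k → Fin 3) (x : E2) :
    Sword (Fin.cons i ω : Fin (k + 1) → Fin 3) x = Smap i (Sword ω x) := by
  simp [Sword, List.ofFn_succ]

lemma Sword_succ (ω : Fin (k + 1) → Fin 3) (x : E2) :
    Sword ω x = Smap (ω 0) (Sword (Fin.tail ω) x) := by
  rw [← Sword_cons, Fin.cons_self_tail]

lemma Sword_sub_Sword (ω : Fin k → Fin 3) (x y : E2) :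
    Sword ω x - Sword ω y = (1 / 3 : ℝ) ^ k • (x - y) := by
  induction k with
  | zero => simp [Sword_zero]
  | succ k ih => rw [Sword_succ, Sword_succ, Smap_sub_Smap, ih, smul_smul, pow_succ']

lemma norm_Sword_sub_Sword (ω : Fin k → Fin 3) (x y : E2) :
    ‖Sword ω x - Sword ω y‖ = (1 / 3) ^ k * ‖x - y‖ := by
  rw [Sword_sub_Sword, norm_smul, Real.norm_of_nonneg (by positivity)]

lemma continuous_Sword (ω : Fin k → Fin 3) : Continuous (Sword ω) := by
  rw [funext fun x => sub_eq_iff_eq_add.1 (Sword_sub_Sword ω x 0)]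
  fun_prop

lemma surjective_Smap (i : Fin 3) : Function.Surjective (Smap i) := fun a =>
  ⟨(3 : ℝ) • a - (2 : ℝ) • vertex i, by rw [Smap_apply]; module⟩

lemma surjective_Sword (ω : Fin k → Fin 3) : Function.Surjective (Sword ω) := by
  induction k with
  | zero => exact fun a => ⟨a, Sword_zero ω a⟩
  | succ k ih =>
    rw [funext (Sword_succ ω)]
    exact (surjective_Smap _).comp (ih _)

lemma mapsTo_Sword_Tri (ω : Fin k → Fin 3) : Set.MapsTo (Sword ω) Tri Tri := by
  induction k with
  | zero => exact fun x hx => (Sword_zero ω x).symm ▸ hx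
  | succ k ih =>
    rw [funext (Sword_succ ω)]
    exact (mapsTo_Smap_Tri _).comp (ih _)

lemma one_third_pow_le_norm_Sword_sub_Sword {ω τ : Fin k → Fin 3} (hωτ : ω ≠ τ) {x y : E2}
    (hx : x ∈ Tri) (hy : y ∈ Tri) : (1 / 3 : ℝ) ^ k ≤ ‖Sword ω x - Sword τ y‖ := by
  induction k with
  | zero => exact absurd (Subsingleton.elim ω τ) hωτ
  | succ k ih =>
    rw [Sword_succ, Sword_succ, pow_succ']
    by_cases hhead : ω 0 = τ 0
    · have htail : Fin.tail ω ≠ Fin.tail τ := fun h => hωτ <| by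
        rw [← Fin.cons_self_tail ω, ← Fin.cons_self_tail τ, hhead, h]
      rw [hhead, Smap_sub_Smap, norm_smul, Real.norm_of_nonneg (by norm_num)]
      gcongr
      exact ih htail
    · exact (mul_le_of_le_one_right (by norm_num) (pow_le_one₀ (by norm_num) (by norm_num))).trans
        (one_third_le_norm_Smap_sub_Smap hhead (mapsTo_Sword_Tri _ hx) (mapsTo_Sword_Tri _ hy))

lemma pairwise_one_le_norm_of_Sword_eq {a : E2} {b : (Fin k → Fin 3) → E2}
    (hb : ∀ ω, Sword ω (b ω) = a) :
    Pairwise fun ω τ => ∀ x ∈ Tri, ∀ y ∈ Tri, 1 ≤ ‖x - b ω - (y - b τ)‖ := by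
  intro ω τ hωτ x hx y hy
  have h := one_third_pow_le_norm_Sword_sub_Sword hωτ hx hy
  rw [← sub_sub_sub_cancel_right _ _ a, ← hb ω, Sword_sub_Sword, hb ω, ← hb τ, Sword_sub_Sword,
    ← smul_sub, norm_smul, Real.norm_of_nonneg (by positivity)] at h
  exact (le_mul_iff_one_le_right (by positivity)).1 h

lemma saving_Sword (ω : Fin k → Fin 3) (t : ℝ) (b x : E2) :
    saving ((1 / 9) ^ k * t) (Sword ω b) (Sword ω x) = (1 / 9) ^ k * saving t b x := by
  have hsq : ((1 / 3 : ℝ) ^ k) ^ 2 = (1 / 9) ^ k := by rw [pow_right_comm]; norm_num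
  rw [← hsq, saving_eq_sq_mul t (norm_Sword_sub_Sword ω x b)]

variable {P : Measure E2}

lemma isSelfSimilar_Sword (hP : IsSelfSimilar Smap P) (k : ℕ) :
    IsSelfSimilar (Sword : (Fin k → Fin 3) → E2 → E2) P := by
  induction k with
  | zero => simp [IsSelfSimilar, funext (Sword_zero _)]
  | succ k ih =>
    have hcomp := (hP.comp ih measurable_Smap fun ω => (continuous_Sword ω).measurable).reindex
      (Fin.consEquiv fun _ => Fin 3).symm
    convert hcomp using 2 with ω
    exact funext (Sword_succ ω)

variable [IsProbabilityMeasure P]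

lemma integral_saving_eq_sum_of_Sword_eq (hP : IsSelfSimilar Smap P) (t : ℝ) {a : E2}
    {b : (Fin k → Fin 3) → E2} (hb : ∀ ω, Sword ω (b ω) = a) :
    ∫ x, saving ((1 / 9) ^ k * t) a x ∂P = (1 / 27) ^ k * ∑ ω, ∫ x, saving t (b ω) x ∂P := by
  have hcell (ω : Fin k → Fin 3) : ∫ x, saving ((1 / 9) ^ k * t) a (Sword ω x) ∂P =
      (1 / 9) ^ k * ∫ x, saving t (b ω) x ∂P := by
    rw [← hb ω, ← integral_const_mul]
    simp only [saving_Sword]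
  rw [(isSelfSimilar_Sword hP k).integral_eq (fun ω => (continuous_Sword ω).measurable)
    (integrable_saving P _ a)]
  simp only [hcell, ← Finset.mul_sum, smul_eq_mul, ← mul_assoc]
  congr 1
  rw [Fintype.card_fun, Fintype.card_fin, Fintype.card_fin, Nat.cast_pow, ← inv_pow, ← mul_pow]
  norm_num

lemma integral_saving_le_pow_mul (hP : IsSelfSimilar Smap P) (k : ℕ) (a : E2) :
    ∫ x, saving ((1 / 9) ^ k * (1 / 2)) a x ∂P ≤ (1 / 27) ^ k * (1 / 3) := by
  choose b hb using fun ω : Fin k → Fin 3 => surjective_Sword ω a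
  rw [integral_saving_eq_sum_of_Sword_eq hP _ hb]
  gcongr
  exact sum_integral_saving_le_one_third hP (pairwise_one_le_norm_of_Sword_eq hb)

lemma integral_saving_lt_pow_mul (hP : IsSelfSimilar Smap P) {a : E2}
    (ha : a ∉ Set.range fun ω : Fin k → Fin 3 => Sword ω centroid) :
    ∫ x, saving ((1 / 9) ^ k * (1 / 2)) a x ∂P < (1 / 27) ^ k * (1 / 3) := by
  choose b hb using fun ω : Fin k → Fin 3 => surjective_Sword ω a
  rw [integral_saving_eq_sum_of_Sword_eq hP _ hb]
  gcongr
  exact sum_integral_saving_lt_one_third hP (pairwise_one_le_norm_of_Sword_eq hb)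
    fun ω hω => ha ⟨ω, hω ▸ hb ω⟩

lemma err_range_Sword_centroid_le (hP : IsSelfSimilar Smap P) (k : ℕ) :
    err P (Set.range fun ω : Fin k → Fin 3 => Sword ω centroid) ≤
      ENNReal.ofReal ((1 / 9) ^ k * (1 / 6)) := by
  have hsq (ω : Fin k → Fin 3) (x : E2) :
      ‖Sword ω x - Sword ω centroid‖ ^ 2 = (1 / 9) ^ k * ‖x - centroid‖ ^ 2 := by
    rw [norm_Sword_sub_Sword, mul_pow, pow_right_comm]
    norm_num
  have hcell (ω : Fin k → Fin 3) :
      ∫⁻ x, ⨅ a ∈ Set.range fun τ : Fin k → Fin 3 => Sword τ centroid,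
        ENNReal.ofReal (‖Sword ω x - a‖ ^ 2) ∂P ≤ ENNReal.ofReal ((1 / 9) ^ k * (1 / 6)) := by
    rw [← integral_norm_sub_centroid_sq hP, ← integral_const_mul,
      ofReal_integral_eq_lintegral_ofReal (integrable_of_continuous hP (by fun_prop))
        (.of_forall fun x => by positivity)]
    refine lintegral_mono fun x => ?_
    rw [← hsq ω x]
    exact iInf₂_le (Sword ω centroid) ⟨ω, rfl⟩
  refine ((isSelfSimilar_Sword hP k).lintegral_le _).trans ?_
  refine (mul_le_mul_right (Finset.sum_le_card_nsmul _ _ _ fun ω _ => hcell ω) _).trans ?_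
  rw [Finset.card_univ, nsmul_eq_mul, ← mul_assoc]
  exact mul_le_of_le_one_left zero_le (ENNReal.inv_mul_le_one _)

lemma ncard_range_Sword_le (k : ℕ) (x : E2) :
    (Set.range fun ω : Fin k → Fin 3 => Sword ω x).ncard ≤ 3 ^ k := by
  rw [← Nat.card_coe_set_eq]
  exact (Finite.card_range_le _).trans_eq (by simp)

end Words

lemma ofReal_one_ninth_pow_mul (k : ℕ) :
    ENNReal.ofReal ((1 / 9) ^ k * (1 / 6)) = 1 / 6 * (1 / 9 ^ k) := by
  rw [ENNReal.ofReal_mul (by positivity), ENNReal.ofReal_pow (by norm_num),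
    ENNReal.ofReal_div_of_pos (by norm_num), ENNReal.ofReal_div_of_pos (by norm_num), mul_comm]
  simp [ENNReal.inv_pow]

/-- For every ℓ ≥ 1 and n = 3^ℓ, the set {S_ω(c) : ω ∈ {1,2,3}^ℓ}, c = (1/2, √3/6), is the
unique optimal set of n-means for the R-measure P, and V_n(P) = (1/6)(1/9^ℓ). -/
theorem stmt_13 (P : Measure E2) [IsProbabilityMeasure P]
    (hP : P = (3 : ℝ≥0∞)⁻¹ • (P.map S1 + P.map S2 + P.map S3))
    (ℓ : ℕ) (hℓ : 1 ≤ ℓ) :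
    IsOptimal P (3 ^ ℓ)
        (Set.range fun ω : Fin ℓ → Fin 3 => Sword ω (pt (1/2) (Real.sqrt 3 / 6)))
      ∧ (∀ β : Set E2, IsOptimal P (3 ^ ℓ) β →
          β = Set.range fun ω : Fin ℓ → Fin 3 => Sword ω (pt (1/2) (Real.sqrt 3 / 6)))
      ∧ quantErr P (3 ^ ℓ) = (1 / 6 : ℝ≥0∞) * (1 / 9 ^ ℓ) := by
  have hself : IsSelfSimilar Smap P := by
    simpa [IsSelfSimilar, Smap, Fin.sum_univ_three] using hP
  have hle := integral_saving_le_pow_mul hself ℓ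
  have hlt (a : E2) := integral_saving_lt_pow_mul (k := ℓ) hself (a := a)
  have hcard := ncard_range_Sword_le ℓ centroid
  have hfin := Set.finite_range fun ω : Fin ℓ → Fin 3 => Sword ω centroid
  have herr := err_range_Sword_centroid_le hself ℓ
  have hvalue : (1 / 9 : ℝ) ^ ℓ * (1 / 2) - (3 ^ ℓ : ℕ) * ((1 / 27) ^ ℓ * (1 / 3)) =
      (1 / 9) ^ ℓ * (1 / 6) := by
    rw [Nat.cast_pow, ← mul_assoc, ← mul_pow]
    norm_num
    ring
  rw [← hvalue] at herr
  refine ⟨isOptimal_of_integral_saving_le hle hfin hcard herr,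
    fun β => eq_of_isOptimal_of_integral_saving_lt hle hlt (by positivity)
      (hvalue ▸ by positivity) hfin hcard herr, ?_⟩
  rw [quantErr_eq_of_integral_saving_le hle hfin hcard herr, hvalue, ofReal_one_ninth_pow_mul]

end
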